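/- arXiv:1504.00090 — 7 statements merged into one kernel-verified Lean document; each statement's English description precedes it below -/
import Mathlib

section
/- Let K be a field and A an associative unital K-algebra. Let d, a ∈ A and u, w ∈ K be such that [d, [d, a]_u]_w = 0, and let b₁, …, b_m ∈ A be elements each commuting with d (d·b_j = b_j·d for all j). Then for all scalars c₁, …, c_m ∈ K, [d, [b₁, …, b_m, [d, a]_u]_{(c₁,…,c_m)}]_w = 0. -/
/-- The quantum (q-deformed) bracket `[x, y]_w = x*y - w • (y*x)`. -/
def qbr {K : Type*} [Field K] {A : Type*} [Ring A] [Algebra K A]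
    (w : K) (x y : A) : A :=
  x * y - w • (y * x)

/-- Right-nested iterated quantum bracket: the list pairs each element with the
scalar of the bracket in which it is the left argument; the head of the list is
the outermost bracket. -/
def qiter {K : Type*} [Field K] {A : Type*} [Ring A] [Algebra K A] :
    List (K × A) → A → A
  | [], a => a
  | p :: rest, a => qbr p.1 p.2 (qiter rest a)

/-- Left multiplication and right multiplication by `d` commute with those by `b` when `d` and `b`
commute, so the operators `[d, ·]_w` and `[b, ·]_c` commute. Hence `[d, ·]_w` can be moved through
an iterated bracket onto its innermost argument. -/
theorem qbr_qbr_comm {K : Type*} [Field K] {A : Type*} [Ring A] [Algebra K A]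
    {d b : A} (h : d * b = b * d) (w c : K) (x : A) :
    qbr w d (qbr c b x) = qbr c b (qbr w d x) := by
  have h1 : d * (b * x) = b * (d * x) := by rw [← mul_assoc, h, mul_assoc]
  have h2 : x * b * d = x * d * b := by rw [mul_assoc, ← h, mul_assoc]
  simp only [qbr, mul_sub, sub_mul, mul_smul_comm, smul_mul_assoc, smul_sub, h1, h2,
    smul_comm w c, mul_assoc]
  abel

theorem qbr_qiter_serre_vanish {K : Type*} [Field K] {A : Type*} [Ring A] [Algebra K A]
    (d a : A) (u w : K) (hserre : qbr w d (qbr u d a) = 0)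
    (l : List (K × A)) (hcomm : ∀ p ∈ l, d * p.2 = p.2 * d) :
    qbr w d (qiter l (qbr u d a)) = 0 := by
  induction l with
  | nil => exact hserre
  | cons p l ih =>
    rw [qiter, qbr_qbr_comm (hcomm p (by simp)),
      ih fun q hq => hcomm q (List.mem_cons_of_mem p hq)]
    simp [qbr]
end

section
/- Let K be a field, A an associative unital K-algebra, and r, s ∈ K nonzero scalars with r + s ≠ 0. Suppose a, b, c ∈ A satisfy: (i) b·c = c·b; (ii) the quantum Serre relation [a, [b, a]_{r⁻¹}]_s = 0; and (iii) the quantum Serre relation [a, [a, c]_{r⁻¹}]_{s⁻¹} = 0. Then a commutes with the iterated bracket [b, [a, c]_{r⁻¹}]_{r⁻¹}, i.e. [a, [b, [a, c]_{r⁻¹}]_{r⁻¹}] = 0. (This is the abstract form of the relation [x_i⁻(0), [x_{i−1}⁻(0), x_i⁻(0), x_{i+1}⁻(0)]_{(r⁻¹,r⁻¹)}] = 0 among Drinfeld generators of type A_{2n−1}^{(2)}.) -/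
theorem serre_commute_A2nm1 {K : Type*} [Field K] {A : Type*} [Ring A] [Algebra K A]
    (r s : K) (hr : r ≠ 0) (hs : s ≠ 0) (hrs : r + s ≠ 0)
    (a b c : A)
    (hbc : b * c = c * b)
    (hserre1 : qbr s a (qbr r⁻¹ b a) = 0)
    (hserre2 : qbr s⁻¹ a (qbr r⁻¹ a c) = 0) :
    qbr (1 : K) a (qbr r⁻¹ b (qbr r⁻¹ a c)) = 0 := by
  have h1 : (r + s) • (a * (b * a)) = a * (a * b) + (r * s) • (b * (a * a)) := by
    have h := congrArg (fun x => r • x) hserre1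
    simp only [qbr, mul_sub, sub_mul, smul_sub, mul_smul_comm, smul_mul_assoc, mul_assoc,
      smul_zero] at h
    rw [← sub_eq_zero, ← h]
    match_scalars <;> field_simp <;> ring
  have h2 : (r + s) • (a * (c * a)) = (r * s) • (a * (a * c)) + c * (a * a) := by
    have h := congrArg (fun x => (-(r * s)) • x) hserre2
    simp only [qbr, mul_sub, sub_mul, smul_sub, mul_smul_comm, smul_mul_assoc, mul_assoc,
      smul_zero] at h
    rw [← sub_eq_zero, ← h]
    match_scalars <;> field_simp <;> ring
  have h_abac := congrArg (fun x => x * c) h1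
  have h_caba := congrArg (fun x => c * x) h1
  have h_baca := congrArg (fun x => b * x) h2
  have h_acab := congrArg (fun x => x * b) h2
  have hcb (x : A) : c * (b * x) = b * (c * x) := by
    rw [← mul_assoc, ← hbc, mul_assoc]
  simp only [add_mul, mul_add, mul_smul_comm, smul_mul_assoc, mul_assoc, ← hbc, hcb]
    at h_abac h_caba h_baca h_acab
  refine (smul_eq_zero_iff_right hrs).mp ?_
  simp only [qbr, mul_sub, sub_mul, smul_sub, mul_smul_comm, smul_mul_assoc, mul_assoc,
    ← hbc, hcb]
  linear_combination (norm := skip)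
    h_abac - h_baca + (r⁻¹ * r⁻¹) • h_acab - (r⁻¹ * r⁻¹) • h_caba
  match_scalars <;> field_simp <;> ring
end

section
/- Let K be a field, A an associative unital K-algebra, and r, s ∈ K nonzero scalars with r + s ≠ 0. Suppose a, b, d ∈ A satisfy: (i) b·d = d·b; (ii) the quantum Serre relation [a, [b, a]_s]_{r⁻¹} = 0; and (iii) the quantum Serre relation [a, [a, d]_s]_r = 0. Then [a, [b, [a, d]_s]_s] = 0. (This is the abstract form of the relation [x_2⁻(0), x_{1 4}⁻(1)] = 0, where x_{1 4}⁻(1) = [x_3⁻(0), x_2⁻(0), x_1⁻(1)]_{(s,s)}, used in the proof of Lemma 6.1 for type A_{2n−1}^{(2)}.) -/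
theorem serre_commute_x2_x14 {K : Type*} [Field K] {A : Type*} [Ring A] [Algebra K A]
    (r s : K) (hr : r ≠ 0) (hs : s ≠ 0) (hrs : r + s ≠ 0)
    (a b d : A)
    (hbd : b * d = d * b)
    (hserre1 : qbr r⁻¹ a (qbr s b a) = 0)
    (hserre2 : qbr r a (qbr s a d) = 0) :
    qbr (1 : K) a (qbr s b (qbr s a d)) = 0 := by
  have hbd' : ∀ x : A, b * (d * x) = d * (b * x) := fun x => by
    rw [← mul_assoc, hbd, mul_assoc]
  have key : (r + s) • qbr (1 : K) a (qbr s b (qbr s a d))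
      = (r • qbr r⁻¹ a (qbr s b a)) * d - (s ^ 2) • (d * (r • qbr r⁻¹ a (qbr s b a)))
        + b * qbr r a (qbr s a d) - (s ^ 2) • (qbr r a (qbr s a d) * b) := by
    simp only [qbr, mul_sub, sub_mul, smul_sub, mul_smul_comm, smul_mul_assoc, smul_smul,
      mul_assoc, hbd, hbd']
    match_scalars <;> field_simp <;> ring
  rw [hserre1, hserre2] at key
  simpa [hrs] using key
end

section
/- Let K be a field, A an associative unital K-algebra, and r, s ∈ K nonzero scalars. Suppose a, b, c ∈ A satisfy: (i) a·c = c·a; and (ii) the quantum Serre relation [a, [a, b]_s]_r = 0. Then [a, [a, [b, c]_s]_s]_r = 0. (This is the abstract form of Lemma 6.3: [x_{n−1}⁻(0), x_{1 n−1}⁻(1)]_r = 0, where x_{1 n−1}⁻(1) = [x_{n−1}⁻(0), x_{n−2}⁻(0), x_{1 n−3}⁻(1)]_{(s,s)}.) -/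
/-- If `a` commutes with `c`, then `[a, -]_w` passes through `[-, c]_v`. -/
theorem qbr_qbr_of_commute {K : Type*} [Field K] {A : Type*} [Ring A] [Algebra K A]
    (w v : K) (a b c : A) (hac : a * c = c * a) :
    qbr w a (qbr v b c) = qbr v (qbr w a b) c := by
  have h1 : a * (c * b) = c * (a * b) := by rw [← mul_assoc, hac, mul_assoc]
  simp only [qbr, mul_sub, sub_mul, mul_smul_comm, smul_mul_assoc, smul_sub, mul_assoc, h1, hac,
    smul_comm v w]
  abel

theorem qbr_pass_lemma63 {K : Type*} [Field K] {A : Type*} [Ring A] [Algebra K A]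
    (r s : K) (hr : r ≠ 0) (hs : s ≠ 0)
    (a b c : A)
    (hac : a * c = c * a)
    (hserre : qbr r a (qbr s a b) = 0) :
    qbr r a (qbr s a (qbr s b c)) = 0 := by
  rw [qbr_qbr_of_commute s s a b c hac, qbr_qbr_of_commute r s a _ c hac, hserre]
  simp [qbr]
end

section
/- Let K be a field, A an associative unital K-algebra, and r, s ∈ K nonzero scalars with r² + s² ≠ 0. Suppose a, b, c ∈ A satisfy: (i) b·c = c·b; (ii) the quantum Serre relation [a, [b, a]_{r⁻²}]_{s²} = 0; and (iii) the quantum Serre relation [a, [a, c]_{r⁻²}]_{s⁻²} = 0. Then [a, [b, [a, c]_{r⁻²}]_{r⁻²}] = 0. (This is the abstract form of Lemma 7.2 for type D_{n+1}^{(2)}: [x_i⁻(0), [x_{i−1}⁻(0), x_i⁻(0), x_{i+1}⁻(0)]_{(r⁻²,r⁻²)}] = 0.) -/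
/-- The result with free parameters `p = r⁻²`, `q = s²`. -/
theorem serre_commute_aux {K : Type*} [Field K] {A : Type*} [Ring A] [Algebra K A]
    (p q : K) (hq : q ≠ 0) (hpq : 1 + p * q ≠ 0) (a b c : A)
    (hbc : b * c = c * b)
    (h1 : qbr q a (qbr p b a) = 0)
    (h2 : qbr q⁻¹ a (qbr p a c) = 0) :
    qbr (1 : K) a (qbr p b (qbr p a c)) = 0 := by
  have S1 : (1 + p * q) • (a * b * a) - p • (a * a * b) - q • (b * a * a) = 0 := by
    rw [← h1]
    simp only [qbr, mul_sub, sub_mul, mul_smul_comm, smul_mul_assoc, mul_assoc]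
    module
  have S2 : q • (a * a * c) - (1 + p * q) • (a * c * a) + p • (c * a * a) = 0 := by
    rw [← smul_zero q, ← h2]
    simp only [qbr, mul_sub, sub_mul, mul_smul_comm, smul_mul_assoc, mul_assoc]
    match_scalars <;> field_simp
    ring
  have e1 := congrArg (· * c) S1
  have e2 := congrArg (b * ·) S2
  have e3 := congrArg (c * ·) S1
  have e4 := congrArg (· * b) S2
  -- Words are right-associated; these rules move `b` to the left of an adjacent `c`.
  have hcb : c * b = b * c := hbc.symm
  have hcb' : ∀ x : A, c * (b * x) = b * (c * x) := fun x => by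
    rw [← mul_assoc, hcb, mul_assoc]
  simp only [mul_sub, sub_mul, mul_add, add_mul, mul_smul_comm, smul_mul_assoc, mul_assoc,
    mul_zero, zero_mul, hcb, hcb'] at e1 e2 e3 e4
  refine (smul_eq_zero_iff_right hpq).mp ?_
  simp only [qbr, mul_sub, sub_mul, mul_smul_comm, smul_mul_assoc, mul_assoc, hcb]
  linear_combination (norm := module) e1 + e2 - p ^ 2 • e3 - p ^ 2 • e4

theorem serre_commute_Dnp1 {K : Type*} [Field K] {A : Type*} [Ring A] [Algebra K A]
    (r s : K) (hr : r ≠ 0) (hs : s ≠ 0) (hrs : r ^ 2 + s ^ 2 ≠ 0)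
    (a b c : A)
    (hbc : b * c = c * b)
    (hserre1 : qbr (s ^ 2) a (qbr (r ^ 2)⁻¹ b a) = 0)
    (hserre2 : qbr (s ^ 2)⁻¹ a (qbr (r ^ 2)⁻¹ a c) = 0) :
    qbr (1 : K) a (qbr (r ^ 2)⁻¹ b (qbr (r ^ 2)⁻¹ a c)) = 0 := by
  refine serre_commute_aux _ _ (pow_ne_zero 2 hs) ?_ a b c hbc hserre1 hserre2
  have h : 1 + (r ^ 2)⁻¹ * s ^ 2 = (r ^ 2 + s ^ 2) / r ^ 2 := by field_simp
  rw [h]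
  exact div_ne_zero hrs (pow_ne_zero 2 hr)
end

section
/- Let K be a field, A an associative unital K-algebra, and r, s ∈ K nonzero scalars with r ≠ s. Suppose a, a′, b ∈ A satisfy: (i) a·a′ = (r·s⁻¹)·a′·a; and (ii) the quantum Serre relation [a, [a, b]_{r⁻³}]_{r⁻²s⁻¹} = 0. Then [a, [a, [b, a′]_{s³}]_{r⁻²s⁻¹}]_{r⁻¹s⁻²} = 0. (This is the abstract form of the i = 1 case of the relation [x_i⁻(0), x_θ⁻(1)]_{⟨i,0⟩⁻¹} = 0 for type D₄^{(3)}, where x_θ⁻(1) = [x_1⁻(0), x_2⁻(0), x_1⁻(1)]_{(s³, r⁻²s⁻¹)}, a = x_1⁻(0), a′ = x_1⁻(1), b = x_2⁻(0).) -/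
section

variable {K : Type*} [Field K] {A : Type*} [Ring A] [Algebra K A]

lemma qbr_mul_right_of_qcomm {q : K} {a a' : A} (h : a * a' = q • (a' * a)) (w : K) (x : A) :
    qbr (q * w) a (x * a') = qbr w a x * a' := by
  have h2 : x * a * a' = q • (x * a' * a) := by
    rw [mul_assoc, h, mul_smul_comm, mul_assoc]
  rw [qbr, qbr, sub_mul, smul_mul_assoc, h2, smul_smul, mul_comm w q, mul_assoc a]

lemma qbr_mul_left_of_qcomm {q : K} {a a' : A} (h : a * a' = q • (a' * a)) (w : K) (x : A) :
    qbr (q * w) a (a' * x) = q • (a' * qbr w a x) := by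
  rw [qbr, qbr, ← mul_assoc a, h, mul_sub, smul_sub, mul_smul_comm, smul_smul, smul_mul_assoc,
    mul_assoc, mul_assoc]

lemma qbr_sub (w : K) (a x y : A) : qbr w a (x - y) = qbr w a x - qbr w a y := by
  simp only [qbr, mul_sub, sub_mul, smul_sub]
  abel

lemma qbr_smul (w c : K) (a x : A) : qbr w a (c • x) = c • qbr w a x := by
  simp only [qbr, mul_smul_comm, smul_mul_assoc, smul_sub, smul_comm c w]

end

theorem serre_commute_D43_i1 {K : Type*} [Field K] {A : Type*} [Ring A] [Algebra K A]
    (r s : K) (hr : r ≠ 0) (hs : s ≠ 0) (hrs : r ≠ s)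
    (a a' b : A)
    (haa' : a * a' = (r * s⁻¹) • (a' * a))
    (hserre : qbr (r ^ 2 * s)⁻¹ a (qbr (r ^ 3)⁻¹ a b) = 0) :
    qbr (r * s ^ 2)⁻¹ a (qbr (r ^ 2 * s)⁻¹ a (qbr (s ^ 3) b a')) = 0 := by
  have h1 : (r ^ 2 * s)⁻¹ = r * s⁻¹ * (r ^ 3)⁻¹ := by field_simp
  have h2 : (r * s ^ 2)⁻¹ = r * s⁻¹ * (r ^ 2 * s)⁻¹ := by field_simp
  have hright : qbr (r * s ^ 2)⁻¹ a (qbr (r ^ 2 * s)⁻¹ a (b * a')) = 0 := by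
    rw [h2, h1, qbr_mul_right_of_qcomm haa', ← h1, qbr_mul_right_of_qcomm haa', hserre, zero_mul]
  have hleft : qbr (r * s ^ 2)⁻¹ a (qbr (r ^ 2 * s)⁻¹ a (a' * b)) = 0 := by
    rw [h2, h1, qbr_mul_left_of_qcomm haa', ← h1, qbr_smul, qbr_mul_left_of_qcomm haa', hserre,
      mul_zero, smul_zero, smul_zero]
  rw [show qbr (s ^ 3) b a' = b * a' - s ^ 3 • (a' * b) from rfl, qbr_sub, qbr_sub, qbr_smul,
    qbr_smul, hright, hleft, smul_zero, sub_zero]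
end

section
/- Let K be a field, A an associative unital K-algebra, and r, s ∈ K nonzero scalars with r³ + s³ ≠ 0. Suppose a, a′, b ∈ A satisfy: (i) a·a′ = (r·s⁻¹)·a′·a; (ii) the quantum Serre relation [b, [a, b]_{r⁻³}]_{s³} = 0; and (iii) the quantum Serre relation [b, [b, a′]_{s³}]_{r³} = 0. Then [b, [a, [b, a′]_{s³}]_{r⁻²s⁻¹}]_{(rs)³} = 0. (This is the abstract form of the i = 2 case of the relation [x_i⁻(0), x_θ⁻(1)]_{⟨i,0⟩⁻¹} = 0 for type D₄^{(3)}, where x_θ⁻(1) = [x_1⁻(0), x_2⁻(0), x_1⁻(1)]_{(s³, r⁻²s⁻¹)}, a = x_1⁻(0), a′ = x_1⁻(1), b = x_2⁻(0).) -/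
theorem serre_commute_D43_i2 {K : Type*} [Field K] {A : Type*} [Ring A] [Algebra K A]
    (r s : K) (hr : r ≠ 0) (hs : s ≠ 0) (hrs : r ^ 3 + s ^ 3 ≠ 0)
    (a a' b : A)
    (haa' : a * a' = (r * s⁻¹) • (a' * a))
    (hserre1 : qbr (s ^ 3) b (qbr (r ^ 3)⁻¹ a b) = 0)
    (hserre2 : qbr (r ^ 3) b (qbr (s ^ 3) b a') = 0) :
    qbr ((r * s) ^ 3) b (qbr (r ^ 2 * s)⁻¹ a (qbr (s ^ 3) b a')) = 0 := by
  have hk : r * s⁻¹ = r ^ 3 * (r ^ 2 * s)⁻¹ := by field_simp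
  have hR : r ^ 3 * (r ^ 3)⁻¹ = 1 := mul_inv_cancel₀ (pow_ne_zero 3 hr)
  rw [hk] at haa'
  generalize (r ^ 2 * s)⁻¹ = t at *
  generalize (r ^ 3)⁻¹ = u at *
  rw [mul_pow]
  generalize r ^ 3 = R at *
  generalize s ^ 3 = S at *
  simp only [qbr, mul_sub, sub_mul, smul_mul_assoc, mul_smul_comm, mul_assoc] at *
  have h1 : (R + S) • (b * (a * b)) = b * (b * a) + (R * S) • (a * (b * b)) := by
    -- `hserre1` multiplied by `R` has no inverse left in it.
    have h := congrArg (R • ·) hserre1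
    simp only [smul_sub, smul_smul, smul_zero, ← mul_assoc, mul_right_comm R S u, hR, one_mul,
      one_smul] at h
    simp only [← mul_assoc]
    linear_combination (norm := module) h
  have h2 : (R + S) • (b * (a' * b)) = b * (b * a') + (R * S) • (a' * (b * b)) := by
    linear_combination (norm := module) -hserre2
  have e1 := congrArg (· * a') h1
  have e2 := congrArg (a' * ·) h1
  have e3 := congrArg (· * a) h2
  have e4 := congrArg (a * ·) h2
  have f1 := congrArg (fun x => b * (b * x)) haa'
  have f2 := congrArg (fun x => b * (x * b)) haa'
  have f3 := congrArg (· * (b * b)) haa'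
  simp only [mul_add, add_mul, smul_mul_assoc, mul_smul_comm, mul_assoc] at e1 e2 e3 e4 f1 f2 f3
  refine (smul_eq_zero_iff_right hrs).mp ?_
  linear_combination (norm := module) e1 - (t * R * S ^ 2) • e2 + (t * S) • e3 - (R * S) • e4
    + f1 - (S * (R + S)) • f2 + (R * S ^ 3) • f3
end
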